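/- For every n ∈ ℕ, n ≥ 1, the improper integral ∫₀^∞ Im[J_{in/2}(x)²] dx converges and (1/sinh(πn/2)) · ∫₀^∞ Im[J_{in/2}(x)²] dx = − 1/(2·cosh(πn/2)). -/

import Mathlib

open MeasureTheory Filter Topology

/-- Bessel function of the first kind of complex order `ν` at real `x > 0`. -/
noncomputable def besselJ (ν : ℂ) (x : ℝ) : ℂ :=
  ∑' k : ℕ, ((-1 : ℂ) ^ k * Complex.exp ((ν + 2 * k) * (Real.log (x / 2) : ℂ))) /
    ((Nat.factorial k : ℂ) * Complex.Gamma (ν + k + 1))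

/-- Bessel function of the second kind of complex order `ν` at real `x > 0`. -/
noncomputable def besselY (ν : ℂ) (x : ℝ) : ℂ :=
  (besselJ ν x * Complex.cos (Real.pi * ν) - besselJ (-ν) x) / Complex.sin (Real.pi * ν)

/-- Bessel function of the first kind of order `0` (real-valued). -/
noncomputable def besselJ0 (x : ℝ) : ℝ :=
  ∑' k : ℕ, (-1 : ℝ) ^ k * (x / 2) ^ (2 * k) / (Nat.factorial k : ℝ) ^ 2

/-- Lommel function `S_{-1,0}` for `x > 0`. -/
noncomputable def lommelS (x : ℝ) : ℝ :=
  ∫ t in Set.Ioi (0 : ℝ), t * Real.exp (-x * Real.sinh t)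

/-- Struve function `K₀` for `x > 0`. -/
noncomputable def struveK0 (x : ℝ) : ℝ :=
  (2 / Real.pi) * ∫ t in Set.Ioi (0 : ℝ), Real.exp (-x * Real.sinh t)

/-- Bessel function of the second kind of order `0` (real-valued, for `x > 0`). -/
noncomputable def besselY0 (x : ℝ) : ℝ :=
  (2 / Real.pi) * ((Real.log (x / 2) + Real.eulerMascheroniConstant) * besselJ0 x +
    ∑' k : ℕ, (-1 : ℝ) ^ k * ((harmonic (k + 1) : ℚ) : ℝ) * (x / 2) ^ (2 * (k + 1)) /
      (Nat.factorial (k + 1) : ℝ) ^ 2)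

/-- Struve function `H₀`: `H₀ = K₀ˢ + Y₀`. -/
noncomputable def struveH0 (x : ℝ) : ℝ := struveK0 x + besselY0 x

/-!
For `0 < re z` the product of two copies of `2 K_ν(z) = ∫ exp (ν t - z cosh t) dt` becomes, in the
variables sum and difference, Nicholson's formula
`K_ν(z)² = ½ ∬ exp (2 ν u - 2 z cosh u cosh v) du dv`. Integrating it from `z` to `∞` yields
`Q(z) = ¼ ∬ exp (2 ν u - 2 z cosh u cosh v) / (cosh u cosh v) du dv`, which for `|re ν| < 1/2`
converges absolutely and is continuous up to the imaginary axis. There `Q(0) = π² / (4 cos πν)` is a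
product of two Fourier transforms of `sech`, and `Q(iy) → 0` as `y → ±∞` by the Riemann–Lebesgue
lemma.

On the other hand `Q' = -K_ν²` and `2 sin(πν) K_ν = π (I_{-ν} - I_ν)`. As `I_{±ν}` are regular away
from the negative real axis, the resulting formula for `Q'` persists at `±ix`, where they turn into
`J_{±ν}(x)`; the products `J_ν J_{-ν}` cancel in the sum of the two values and
`d/dx (Q(ix) + Q(-ix)) = π² / (2 sin πν) (J_ν(x)² - J_{-ν}(x)²)`.
Hence `∫₀^∞ (J_ν² - J_{-ν}²) = -tan πν`. For `ν = ia` the orders `ν` and `-ν` are conjugate, and the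
integrand is `2 i Im (J_{ia}²)`.
-/

section Clifford

open Complex
open scoped Nat Real

variable {ν q : ℂ}

/-- The Bessel–Clifford function `₀F₁(; ν + 1; q) / Γ(ν + 1)`, an entire function of `q` for every
order `ν`, through which both `J` and `I` are expressed. -/
noncomputable def besselClifford (ν q : ℂ) : ℂ :=
  regularizedHGFun 0 {ν + 1} q

theorem radius_besselClifford (ν : ℂ) : (regularizedHGFunSeries 0 {ν + 1}).radius = ⊤ :=
  radius_regularizedHGFunSeries_eq_top (by simp)

theorem hasSum_besselClifford (ν q : ℂ) :
    HasSum (fun k : ℕ ↦ (k ! * Gamma (ν + 1 + k))⁻¹ * q ^ k) (besselClifford ν q) := by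
  have h := (regularizedHGFunSeries 0 {ν + 1}).hasSum (x := q) (by simp [radius_besselClifford])
  refine h.congr_fun fun k ↦ ?_
  simp [regularizedHGFunCoeff, mul_comm]

theorem hasDerivAt_besselClifford (ν q : ℂ) :
    HasDerivAt (besselClifford ν) (besselClifford (ν + 1) q) q := by
  set p := regularizedHGFunSeries 0 {ν + 1} with hp
  have hrad : p.radius = ⊤ := radius_besselClifford ν
  have hderiv : HasDerivAt p.sum (p.derivSeries.sum q 1) q :=
    (FormalMultilinearSeries.hasFDerivAt_sum (by simp [hrad])).hasDerivAt
  have hseries := (p.derivSeries.hasSum (x := q)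
    (by simp [top_unique (hrad ▸ p.radius_le_radius_derivSeries)])).mapL
      (ContinuousLinearMap.apply ℂ ℂ (1 : ℂ))
  suffices besselClifford (ν + 1) q = p.derivSeries.sum q 1 from this ▸ hderiv
  refine (hasSum_besselClifford (ν + 1) q).unique (hseries.congr_fun fun k ↦ ?_)
  have hk : (k : ℂ) + 1 ≠ 0 := k.cast_add_one_ne_zero
  simp only [ContinuousLinearMap.apply_apply, FormalMultilinearSeries.apply_eq_prod_smul_coeff,
    Finset.prod_const, Finset.card_univ, Fintype.card_fin, map_smul,
    FormalMultilinearSeries.derivSeries_coeff_one, hp, regularizedHGFunSeries_coeff,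
    regularizedHGFunCoeff, Multiset.map_zero, Multiset.prod_zero, Multiset.map_singleton,
    Multiset.prod_singleton, Nat.factorial_succ, mul_inv_rev, one_div, nsmul_eq_mul, smul_eq_mul]
  push_cast
  field_simp
  ring_nf

theorem continuous_besselClifford (ν : ℂ) : Continuous (besselClifford ν) :=
  continuous_iff_continuousAt.2 fun q ↦ (hasDerivAt_besselClifford ν q).continuousAt

theorem besselClifford_zero (ν : ℂ) : besselClifford ν 0 = (Gamma (ν + 1))⁻¹ := by
  simpa using (hasSum_besselClifford ν 0).unique (hasSum_single 0 (by simp +contextual))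

theorem besselClifford_eq_add (ν q : ℂ) :
    besselClifford ν q = (ν + 1) * besselClifford (ν + 1) q + q * besselClifford (ν + 2) q := by
  have hΓ (k : ℕ) : (Gamma (ν + 1 + k))⁻¹ = (ν + 1 + k) * (Gamma (ν + 1 + 1 + k))⁻¹ := by
    rw [one_div_Gamma_eq_self_mul_one_div_Gamma_add_one, add_right_comm (ν + 1)]
  let g (k : ℕ) : ℂ := k * ((k ! * Gamma (ν + 1 + 1 + k))⁻¹ * q ^ k)
  have hg : HasSum g (q * besselClifford (ν + 2) q) := by
    rw [← hasSum_nat_add_iff' 1]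
    simp only [g, Finset.sum_range_one, Nat.cast_zero, zero_mul, sub_zero]
    refine ((hasSum_besselClifford (ν + 2) q).mul_left q).congr_fun fun k ↦ ?_
    have hk : (k : ℂ) + 1 ≠ 0 := k.cast_add_one_ne_zero
    push_cast [Nat.factorial_succ]
    rw [show ν + 1 + 1 + (k + 1 : ℂ) = ν + 2 + 1 + k by ring, pow_succ]
    field_simp
  refine (hasSum_besselClifford ν q).unique ?_
  refine (((hasSum_besselClifford (ν + 1) q).mul_left (ν + 1)).add hg).congr_fun fun k ↦ ?_
  simp only [g, mul_inv, hΓ]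
  ring

theorem besselClifford_wronskian (ν q : ℂ) :
    besselClifford ν q * besselClifford (-ν - 1) q
      - q * (besselClifford (ν + 1) q * besselClifford (-ν) q) = -sin (π * ν) / π := by
  let w (q : ℂ) : ℂ := besselClifford ν q * besselClifford (-ν - 1) q
    - q * (besselClifford (ν + 1) q * besselClifford (-ν) q)
  have hw (q : ℂ) : HasDerivAt w 0 q := by
    have h₁ := hasDerivAt_besselClifford (-ν - 1) q
    rw [sub_add_cancel] at h₁
    have h₂ := ((hasDerivAt_besselClifford ν q).mul h₁).sub ((hasDerivAt_id q).mul
      ((hasDerivAt_besselClifford (ν + 1) q).mul (hasDerivAt_besselClifford (-ν) q)))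
    refine h₂.congr_deriv ?_
    have h₃ := besselClifford_eq_add ν q
    have h₄ := besselClifford_eq_add (-ν - 1) q
    rw [sub_add_cancel, show -ν - 1 + 2 = -ν + 1 by ring] at h₄
    rw [show ν + 1 + 1 = ν + 2 by ring, h₃, h₄]
    simp only [id_eq, Pi.mul_apply]
    ring
  calc w q = w 0 := is_const_of_deriv_eq_zero (fun q ↦ (hw q).differentiableAt)
        (fun q ↦ (hw q).deriv) q 0
    _ = (Gamma (-ν) * Gamma (1 - -ν))⁻¹ := by
        simp only [w, besselClifford_zero]
        rw [zero_mul, sub_zero, ← mul_inv, mul_comm, sub_add_cancel, sub_neg_eq_add, add_comm 1]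
    _ = -sin (π * ν) / π := by
        rw [Gamma_mul_Gamma_one_sub, inv_div, mul_neg, sin_neg]

/-- The modified Bessel function of the first kind `I_ν`, on the plane slit along the negative real
axis. -/
noncomputable def besselI (ν z : ℂ) : ℂ :=
  (z / 2) ^ ν * besselClifford ν (z ^ 2 / 4)

theorem besselI_recurrence (ν : ℂ) {z : ℂ} (hz : z ≠ 0) :
    z * (besselI (ν - 1) z - besselI (ν + 1) z) = 2 * ν * besselI ν z := by
  have hz' : z / 2 ≠ 0 := by simpa
  have hF := besselClifford_eq_add (ν - 1) (z ^ 2 / 4)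
  rw [sub_add_cancel, show ν - 1 + 2 = ν + 1 by ring] at hF
  simp only [besselI, cpow_add _ _ hz', cpow_sub _ _ hz', cpow_one, hF]
  field_simp
  ring

theorem hasDerivAt_besselI (ν : ℂ) {z : ℂ} (hz : z ∈ slitPlane) :
    HasDerivAt (besselI ν) ((besselI (ν - 1) z + besselI (ν + 1) z) / 2) z := by
  have hz₀ : z ≠ 0 := slitPlane_ne_zero hz
  have hz₂ : z / 2 ∈ slitPlane := by simpa [mem_slitPlane_iff] using hz
  have hF : HasDerivAt (fun z ↦ besselClifford ν (z ^ 2 / 4))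
      (besselClifford (ν + 1) (z ^ 2 / 4) * (z / 2)) z :=
    ((hasDerivAt_besselClifford ν _).comp z ((hasDerivAt_pow 2 z).div_const 4)).congr_deriv
      (by push_cast; ring)
  refine ((((hasDerivAt_id z).div_const 2).cpow_const hz₂).mul hF).congr_deriv ?_
  have hF := besselClifford_eq_add (ν - 1) (z ^ 2 / 4)
  rw [sub_add_cancel, show ν - 1 + 2 = ν + 1 by ring] at hF
  have hz' : z / 2 ≠ 0 := slitPlane_ne_zero hz₂
  simp only [besselI, cpow_add _ _ hz', cpow_sub _ _ hz', cpow_one, hF, id_eq]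
  field_simp
  ring

theorem besselI_cross_product (ν : ℂ) {z : ℂ} (hz : z ≠ 0) :
    z * (besselI ν z * besselI (-ν - 1) z - besselI (ν + 1) z * besselI (-ν) z) =
      -2 * sin (π * ν) / π := by
  have hz' : z / 2 ≠ 0 := by simpa
  have hcpow : (z / 2) ^ ν ≠ 0 := cpow_ne_zero_iff.2 (.inl hz')
  rw [mul_div_assoc, neg_mul, ← mul_neg, ← neg_div, ← besselClifford_wronskian ν (z ^ 2 / 4)]
  simp only [besselI, cpow_add _ _ hz', cpow_sub _ _ hz', cpow_neg, cpow_one]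
  field_simp
  ring

end Clifford

section Macdonald

open Complex Set
open scoped Nat Real

variable {ν z : ℂ}

theorem sq_div_two_le_cosh (t : ℝ) : t ^ 2 / 2 ≤ Real.cosh t := by
  have hsinh : (t / 2) ^ 2 ≤ Real.sinh (t / 2) ^ 2 := by
    rw [sq_le_sq, Real.abs_sinh]
    exact Real.self_le_sinh_iff.2 (abs_nonneg _)
  have hcosh : Real.cosh t = 1 + 2 * Real.sinh (t / 2) ^ 2 := by
    rw [← mul_div_cancel₀ t two_ne_zero, Real.cosh_two_mul, Real.cosh_sq]
    ring_nf
  linarith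

/-- The integrand of the Macdonald function `K_ν` in its integral representation over the whole
real line. -/
noncomputable def macdonaldKernel (ν z : ℂ) (t : ℝ) : ℂ :=
  exp (ν * t - z * Real.cosh t)

theorem norm_macdonaldKernel (ν z : ℂ) (t : ℝ) :
    ‖macdonaldKernel ν z t‖ = Real.exp (ν.re * t - z.re * Real.cosh t) := by
  simp [macdonaldKernel, norm_exp, -ofReal_cosh]

theorem continuous_macdonaldKernel (ν z : ℂ) : Continuous (macdonaldKernel ν z) := by
  unfold macdonaldKernel
  fun_prop

theorem integrable_macdonaldKernel (ν : ℂ) (hz : 0 < z.re) : Integrable (macdonaldKernel ν z) := by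
  have hgauss : Integrable fun t : ℝ ↦ exp (-(z / 2) * t ^ 2 + ν * t + 0) :=
    integrable_cexp_quadratic (by simpa using hz) ν 0
  refine hgauss.mono (continuous_macdonaldKernel ν z).aestronglyMeasurable (ae_of_all _ fun t ↦ ?_)
  have hre : (-(z / 2) * t ^ 2 + ν * t + 0).re = ν.re * t - z.re * (t ^ 2 / 2) := by
    rw [← ofReal_pow]
    simp only [add_re, neg_mul, neg_re, mul_re, div_ofNat_re, ofReal_re, ofReal_im, mul_zero,
      sub_zero, add_zero]
    ring
  rw [norm_macdonaldKernel, norm_exp, hre]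
  gcongr
  exact sq_div_two_le_cosh t

theorem cosh_mul_macdonaldKernel (ν z : ℂ) (t : ℝ) :
    Real.cosh t * macdonaldKernel ν z t =
      (macdonaldKernel (ν - 1) z t + macdonaldKernel (ν + 1) z t) / 2 := by
  simp only [macdonaldKernel, add_mul, sub_mul, one_mul, sub_right_comm _ (t : ℂ),
    add_sub_right_comm _ (t : ℂ), exp_add _ (t : ℂ), exp_sub _ (t : ℂ)]
  rw [ofReal_cosh, cosh, exp_neg]
  ring

theorem sinh_mul_macdonaldKernel (ν z : ℂ) (t : ℝ) :
    Real.sinh t * macdonaldKernel ν z t =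
      (macdonaldKernel (ν + 1) z t - macdonaldKernel (ν - 1) z t) / 2 := by
  simp only [macdonaldKernel, add_mul, sub_mul, one_mul, sub_right_comm _ (t : ℂ),
    add_sub_right_comm _ (t : ℂ), exp_add _ (t : ℂ), exp_sub _ (t : ℂ)]
  rw [ofReal_sinh, sinh, exp_neg]
  ring

theorem hasDerivAt_macdonaldKernel (ν z : ℂ) (t : ℝ) :
    HasDerivAt (macdonaldKernel ν z) (ν * macdonaldKernel ν z t
      - z / 2 * (macdonaldKernel (ν + 1) z t - macdonaldKernel (ν - 1) z t)) t := by
  have hexp := (((hasDerivAt_id t).ofReal_comp.const_mul ν).sub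
    ((Real.hasDerivAt_cosh t).ofReal_comp.const_mul z)).cexp
  refine hexp.congr_deriv ?_
  have h := sinh_mul_macdonaldKernel ν z t
  simp only [macdonaldKernel, id_eq, Pi.sub_apply, ofReal_one] at h ⊢
  linear_combination (-z) * h

/-- The modified Bessel function of the second kind `K_ν` (Macdonald function), given by its
integral representation, hence meaningful for `0 < re z` only. -/
noncomputable def besselK (ν z : ℂ) : ℂ :=
  (∫ t : ℝ, macdonaldKernel ν z t) / 2

theorem besselK_neg (ν z : ℂ) : besselK (-ν) z = besselK ν z := by
  unfold besselK
  rw [← integral_neg_eq_self]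
  simp [macdonaldKernel]

theorem besselK_recurrence (ν : ℂ) (hz : 0 < z.re) :
    z * (besselK (ν + 1) z - besselK (ν - 1) z) = 2 * ν * besselK ν z := by
  have hν := integrable_macdonaldKernel ν hz
  have hsub : Integrable fun t ↦ macdonaldKernel (ν + 1) z t - macdonaldKernel (ν - 1) z t :=
    (integrable_macdonaldKernel (ν + 1) hz).sub (integrable_macdonaldKernel (ν - 1) hz)
  have hibp := integral_eq_zero_of_hasDerivAt_of_integrable (hasDerivAt_macdonaldKernel ν z)
    ((hν.const_mul ν).sub (hsub.const_mul (z / 2))) hν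
  rw [integral_sub (hν.const_mul ν) (hsub.const_mul (z / 2)), integral_const_mul,
    integral_const_mul, integral_sub (integrable_macdonaldKernel (ν + 1) hz)
      (integrable_macdonaldKernel (ν - 1) hz)] at hibp
  unfold besselK
  linear_combination -hibp

theorem hasDerivAt_besselK (ν : ℂ) (hz : 0 < z.re) :
    HasDerivAt (besselK ν) (-(besselK (ν - 1) z + besselK (ν + 1) z) / 2) z := by
  let x : ℂ := (z.re / 2 : ℝ)
  have hx : 0 < x.re := by simpa [x] using hz
  have hnear : {w : ℂ | x.re < w.re} ∈ 𝓝 z :=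
    (isOpen_lt continuous_const continuous_re).mem_nhds (by simpa [x] using hz)
  have hbound (t : ℝ) (w : ℂ) (hw : x.re < w.re) : ‖-(Real.cosh t * macdonaldKernel ν w t)‖ ≤
      ‖(macdonaldKernel (ν - 1) x t + macdonaldKernel (ν + 1) x t) / 2‖ := by
    rw [← cosh_mul_macdonaldKernel, norm_neg, norm_mul, norm_mul, norm_macdonaldKernel,
      norm_macdonaldKernel]
    gcongr
  have hderiv (t : ℝ) (w : ℂ) : HasDerivAt (fun w ↦ macdonaldKernel ν w t)
      (-(Real.cosh t * macdonaldKernel ν w t)) w :=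
    (((hasDerivAt_id w).mul_const (Real.cosh t : ℂ)).const_sub (ν * t)).cexp.congr_deriv
      (by simp only [macdonaldKernel, id_eq]; ring)
  have hmain := (hasDerivAt_integral_of_dominated_loc_of_deriv_le (μ := volume) hnear
    (Eventually.of_forall fun w ↦ (continuous_macdonaldKernel ν w).aestronglyMeasurable)
    (integrable_macdonaldKernel ν hz)
    ((continuous_ofReal.comp Real.continuous_cosh).mul
      (continuous_macdonaldKernel ν z)).neg.aestronglyMeasurable
    (ae_of_all _ hbound)
    (((integrable_macdonaldKernel (ν - 1) hx).add
      (integrable_macdonaldKernel (ν + 1) hx)).div_const 2).norm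
    (ae_of_all _ fun t w _ ↦ hderiv t w)).2
  refine (hmain.div_const 2).congr_deriv ?_
  simp only [cosh_mul_macdonaldKernel]
  rw [integral_neg, integral_div, integral_add (integrable_macdonaldKernel (ν - 1) hz)
    (integrable_macdonaldKernel (ν + 1) hz)]
  unfold besselK
  ring

theorem exp_smul_Gamma_integrand_exp (s : ℂ) (t : ℝ) :
    |Real.exp t| • (Real.exp (-Real.exp t) * (Real.exp t : ℂ) ^ (s - 1)) =
      exp (s * t - Real.exp t) := by
  rw [Real.abs_exp, real_smul, cpow_def_of_ne_zero (by simp), ← ofReal_log (Real.exp_pos t).le,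
    Real.log_exp, ofReal_exp t, ofReal_exp, ← exp_add, ← exp_add]
  push_cast
  ring_nf

theorem integrable_exp_mul_sub_exp {s : ℂ} (hs : 0 < s.re) :
    Integrable fun t : ℝ ↦ exp (s * t - Real.exp t) := by
  have h := GammaIntegral_convergent hs
  rw [← Real.range_exp, ← image_univ, integrableOn_image_iff_integrableOn_abs_deriv_smul .univ
    (fun t _ ↦ (Real.hasDerivAt_exp t).hasDerivWithinAt) Real.exp_injective.injOn,
    integrableOn_univ] at h
  simpa only [exp_smul_Gamma_integrand_exp] using h

theorem Gamma_eq_integral_exp {s : ℂ} (hs : 0 < s.re) :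
    Gamma s = ∫ t : ℝ, exp (s * t - Real.exp t) := by
  rw [Gamma_eq_integral hs, GammaIntegral, ← Real.range_exp, ← image_univ,
    integral_image_eq_integral_abs_deriv_smul .univ
    (fun t _ ↦ (Real.hasDerivAt_exp t).hasDerivWithinAt) Real.exp_injective.injOn,
    setIntegral_univ]
  simp only [exp_smul_Gamma_integrand_exp]

theorem cpow_mul_besselK_eq_integral (ν : ℂ) {x : ℝ} (hx : 0 < x) :
    (x / 2 : ℂ) ^ ν * besselK ν x =
      (∫ t : ℝ, exp (ν * t - Real.exp t - x ^ 2 / 4 * Real.exp (-t))) / 2 := by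
  have hx' : 0 < x / 2 := by positivity
  rw [besselK, ← integral_add_right_eq_self _ (-Real.log (x / 2)), ← mul_div_assoc,
    ← integral_const_mul]
  congr 2 with t
  have hcosh : x * Real.cosh (t - Real.log (x / 2)) =
      Real.exp t + x ^ 2 / 4 * Real.exp (-t) := by
    rw [Real.cosh_eq, neg_sub, Real.exp_sub, Real.exp_sub, Real.exp_log hx', Real.exp_neg]
    field_simp
    ring
  rw [macdonaldKernel, cpow_def_of_ne_zero (by exact_mod_cast hx'.ne'), ← exp_add, ← sub_eq_add_neg,
    ← ofReal_mul, hcosh, ← ofReal_ofNat, ← ofReal_div, ← ofReal_log hx'.le]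
  push_cast
  ring_nf

theorem tendsto_cpow_mul_besselK (hν : 0 < ν.re) :
    Tendsto (fun x : ℝ ↦ (x / 2 : ℂ) ^ ν * besselK ν x) (𝓝[>] 0) (𝓝 (Gamma ν / 2)) := by
  rw [Gamma_eq_integral_exp hν]
  have hlim : Tendsto (fun x : ℝ ↦
      ∫ t : ℝ, exp (ν * t - Real.exp t - x ^ 2 / 4 * Real.exp (-t))) (𝓝[>] 0)
      (𝓝 (∫ t : ℝ, exp (ν * t - Real.exp t))) := by
    refine tendsto_integral_filter_of_dominated_convergence
      (fun t ↦ ‖exp (ν * t - Real.exp t)‖) (.of_forall fun x ↦ ?_) (.of_forall fun x ↦ ?_)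
      (integrable_exp_mul_sub_exp hν).norm (ae_of_all _ fun t ↦ ?_)
    · exact Continuous.aestronglyMeasurable (by fun_prop)
    · refine ae_of_all _ fun t ↦ ?_
      have hre : (x ^ 2 / 4 * Real.exp (-t) : ℂ).re = x ^ 2 / 4 * Real.exp (-t) := by
        norm_cast
      rw [norm_exp, norm_exp, sub_re (ν * t - Real.exp t), hre]
      exact Real.exp_le_exp.2 (sub_le_self _ (by positivity))
    · have hcont : Continuous fun x : ℝ ↦
          exp (ν * t - Real.exp t - x ^ 2 / 4 * Real.exp (-t)) := by fun_prop
      exact tendsto_nhdsWithin_of_tendsto_nhds (hcont.tendsto' 0 _ (by simp))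
  exact (hlim.div_const 2).congr' (eventually_mem_nhdsWithin.mono fun x hx ↦
    (cpow_mul_besselK_eq_integral ν hx).symm)

end Macdonald

section Connection

open Complex Set
open scoped Nat Real

variable {ν z : ℂ}

theorem hasDerivAt_bessel_wronskian (ν : ℂ) (hz : 0 < z.re) :
    HasDerivAt (fun z ↦ z * (besselI ν z * besselK (ν + 1) z + besselI (ν + 1) z * besselK ν z))
      0 z := by
  have hslit : z ∈ slitPlane := .inl hz
  have hz₀ : z ≠ 0 := slitPlane_ne_zero hslit
  have h := (hasDerivAt_id z).mul (((hasDerivAt_besselI ν hslit).mul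
    (hasDerivAt_besselK (ν + 1) hz)).add ((hasDerivAt_besselI (ν + 1) hslit).mul
    (hasDerivAt_besselK ν hz)))
  refine h.congr_deriv ?_
  have hIν := besselI_recurrence ν hz₀
  have hIν' := besselI_recurrence (ν + 1) hz₀
  have hKν := besselK_recurrence ν hz
  have hKν' := besselK_recurrence (ν + 1) hz
  simp only [add_sub_cancel_right, id_eq, Pi.add_apply, Pi.mul_apply] at hIν' hKν' ⊢
  linear_combination (besselK (ν + 1) z * hIν - besselK ν z * hIν' + besselI (ν + 1) z * hKν
    - besselI ν z * hKν') / 2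

theorem tendsto_bessel_wronskian (hν : 0 < ν.re) :
    Tendsto (fun x : ℝ ↦
      (x : ℂ) * (besselI ν x * besselK (ν + 1) x + besselI (ν + 1) x * besselK ν x))
      (𝓝[>] 0) (𝓝 1) := by
  have hF (μ : ℂ) : Tendsto (fun x : ℝ ↦ besselClifford μ ((x : ℂ) ^ 2 / 4)) (𝓝[>] 0)
      (𝓝 (Gamma (μ + 1))⁻¹) := by
    have hcont := continuous_besselClifford μ
    have hcomp : Continuous fun x : ℝ ↦ besselClifford μ ((x : ℂ) ^ 2 / 4) := by fun_prop
    exact tendsto_nhdsWithin_of_tendsto_nhds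
      (hcomp.tendsto' 0 _ (by simp [besselClifford_zero]))
  have hsq : Tendsto (fun x : ℝ ↦ (x : ℂ) ^ 2 / 2) (𝓝[>] 0) (𝓝 0) :=
    tendsto_nhdsWithin_of_tendsto_nhds
      (Continuous.tendsto' (by fun_prop) 0 _ (by simp))
  have hν₁ : 0 < (ν + 1).re := by
    rw [add_re, one_re]
    linarith
  have hlim := (((tendsto_cpow_mul_besselK hν₁).mul (hF ν)).const_mul 2).add
    (hsq.mul ((tendsto_cpow_mul_besselK hν).mul (hF (ν + 1))))
  have hΓ : Gamma (ν + 1) ≠ 0 := Gamma_ne_zero_of_re_pos hν₁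
  rw [zero_mul, add_zero, div_mul_eq_mul_div, mul_inv_cancel₀ hΓ, mul_div_cancel₀ _ two_ne_zero]
    at hlim
  refine hlim.congr' (eventually_mem_nhdsWithin.mono fun x hx ↦ ?_)
  have hx₂ : (x / 2 : ℂ) ≠ 0 := by simpa using (ne_of_gt hx : x ≠ 0)
  simp only [besselI, cpow_add _ _ hx₂, cpow_one]
  ring

theorem bessel_wronskian_of_re_pos (hν : 0 < ν.re) (hz : 0 < z.re) :
    z * (besselI ν z * besselK (ν + 1) z + besselI (ν + 1) z * besselK ν z) = 1 := by
  have hopen : IsOpen {z : ℂ | 0 < z.re} := isOpen_lt continuous_const continuous_re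
  have hconst (x : ℝ) (hx : 0 < x) := hopen.is_const_of_deriv_eq_zero
    (convex_halfSpace_re_gt 0).isPreconnected
    (fun w hw ↦ (hasDerivAt_bessel_wronskian ν hw).differentiableAt.differentiableWithinAt)
    (fun w hw ↦ (hasDerivAt_bessel_wronskian ν hw).deriv) (show (x : ℂ) ∈ _ from hx) hz
  exact (tendsto_nhds_unique (tendsto_bessel_wronskian hν) (tendsto_const_nhds.congr'
    (eventually_mem_nhdsWithin.mono fun x hx ↦ (hconst x hx).symm))).symm

theorem bessel_wronskian_add_one (ν : ℂ) (hz : 0 < z.re) :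
    besselI (ν + 1) z * besselK (ν + 1 + 1) z + besselI (ν + 1 + 1) z * besselK (ν + 1) z =
      besselI ν z * besselK (ν + 1) z + besselI (ν + 1) z * besselK ν z := by
  have hz₀ : z ≠ 0 := slitPlane_ne_zero (.inl hz)
  have hI := besselI_recurrence (ν + 1) hz₀
  have hK := besselK_recurrence (ν + 1) hz
  rw [add_sub_cancel_right] at hI hK
  refine mul_left_cancel₀ hz₀ ?_
  linear_combination besselI (ν + 1) z * hK - besselK (ν + 1) z * hI

theorem bessel_wronskian (ν : ℂ) (hz : 0 < z.re) :
    z * (besselI ν z * besselK (ν + 1) z + besselI (ν + 1) z * besselK ν z) = 1 := by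
  obtain ⟨n, hn⟩ := exists_nat_gt (-ν.re)
  induction n generalizing ν with
  | zero => exact bessel_wronskian_of_re_pos (by simpa using hn) hz
  | succ n ih =>
    rw [← bessel_wronskian_add_one ν hz]
    refine ih (ν + 1) ?_
    push_cast at hn
    simp only [add_re, one_re]
    linarith

theorem two_mul_sin_mul_besselK (ν : ℂ) (hz : 0 < z.re) :
    2 * sin (π * ν) * besselK ν z = π * (besselI (-ν) z - besselI ν z) := by
  have hz₀ : z ≠ 0 := slitPlane_ne_zero (.inl hz)
  have hπ : (π : ℂ) ≠ 0 := by simp [Real.pi_ne_zero]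
  have hν := bessel_wronskian ν hz
  have hν' := bessel_wronskian (-ν - 1) hz
  have hcross := besselI_cross_product ν hz₀
  rw [sub_add_cancel, besselK_neg, ← besselK_neg (-ν - 1), neg_sub, sub_neg_eq_add, add_comm 1]
    at hν'
  rw [eq_div_iff hπ] at hcross
  linear_combination besselK ν z * hcross - π * besselI ν z * hν' + π * besselI (-ν) z * hν

end Connection

section Square

open Complex Set
open scoped Nat Real

variable {ν z : ℂ}

/-- The linear change of variables `(u, v) ↦ (u + v, u - v)` of the plane. -/
noncomputable def sumDiff : ℝ × ℝ →L[ℝ] ℝ × ℝ :=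
  (Matrix.toLin (.finTwoProd ℝ) (.finTwoProd ℝ) !![1, 1; 1, -1]).toContinuousLinearMap

theorem sumDiff_apply (p : ℝ × ℝ) : sumDiff p = (p.1 + p.2, p.1 - p.2) := by
  simp [sumDiff, Matrix.toLin_finTwoProd, sub_eq_add_neg]

theorem abs_det_sumDiff : |sumDiff.det| = 2 := by
  norm_num [sumDiff]

theorem bijective_sumDiff : Function.Bijective sumDiff := by
  refine ⟨fun p q hpq ↦ ?_, fun p ↦ ⟨((p.1 + p.2) / 2, (p.1 - p.2) / 2), ?_⟩⟩
  · simp only [sumDiff_apply, Prod.mk.injEq] at hpq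
    ext <;> linarith
  · rw [sumDiff_apply]
    ext <;> ring

variable {E : Type*} [NormedAddCommGroup E] [NormedSpace ℝ E]

theorem integrable_comp_sumDiff_iff {f : ℝ × ℝ → E} :
    Integrable (fun p ↦ f (sumDiff p)) ↔ Integrable f := by
  have h := integrableOn_image_iff_integrableOn_abs_det_fderiv_smul volume .univ
    (fun _ _ ↦ sumDiff.hasFDerivWithinAt) bijective_sumDiff.injective.injOn f
  rw [image_univ_of_surjective bijective_sumDiff.surjective, integrableOn_univ, integrableOn_univ,
    abs_det_sumDiff] at h
  rw [h, integrable_fun_smul_iff two_ne_zero]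

theorem integral_comp_sumDiff (f : ℝ × ℝ → E) :
    (2 : ℝ) • ∫ p, f (sumDiff p) = ∫ p, f p := by
  have h := integral_image_eq_integral_abs_det_fderiv_smul volume .univ
    (fun _ _ ↦ sumDiff.hasFDerivWithinAt) bijective_sumDiff.injective.injOn f
  rw [image_univ_of_surjective bijective_sumDiff.surjective, setIntegral_univ, setIntegral_univ,
    abs_det_sumDiff] at h
  rw [h, integral_smul]

/-- The integrand of Nicholson's double integral for `K_ν²`, obtained from the product of two
Macdonald kernels in the variables of `sumDiff`. -/
noncomputable def nicholsonKernel (ν z : ℂ) (p : ℝ × ℝ) : ℂ :=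
  exp (2 * ν * p.1 - 2 * z * (Real.cosh p.1 * Real.cosh p.2))

theorem macdonaldKernel_mul_macdonaldKernel (ν z : ℂ) (p : ℝ × ℝ) :
    macdonaldKernel ν z (sumDiff p).1 * macdonaldKernel ν z (sumDiff p).2 =
      nicholsonKernel ν z p := by
  rw [sumDiff_apply, macdonaldKernel, macdonaldKernel, nicholsonKernel, ← exp_add, Real.cosh_add,
    Real.cosh_sub]
  push_cast
  ring_nf

theorem integrable_nicholsonKernel (ν : ℂ) (hz : 0 < z.re) : Integrable (nicholsonKernel ν z) := by
  have hK := integrable_macdonaldKernel ν hz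
  simpa only [macdonaldKernel_mul_macdonaldKernel] using
    integrable_comp_sumDiff_iff.2 (hK.mul_prod hK)

theorem besselK_sq (ν z : ℂ) : besselK ν z ^ 2 = (∫ p, nicholsonKernel ν z p) / 2 := by
  have h := integral_comp_sumDiff
    (fun p ↦ macdonaldKernel ν z p.1 * macdonaldKernel ν z p.2)
  simp only [macdonaldKernel_mul_macdonaldKernel, Measure.volume_eq_prod,
    integral_prod_mul, real_smul] at h
  push_cast at h
  unfold besselK
  linear_combination -h / 4

end Square

section Sech

open Complex Set
open scoped Real

theorem abs_mul_sigmoid_smul_beta_integrand (a b : ℂ) (t : ℝ) :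
    |t.sigmoid * (1 - t.sigmoid)| • ((t.sigmoid : ℂ) ^ (a - 1) * (1 - (t.sigmoid : ℂ)) ^ (b - 1)) =
      (t.sigmoid : ℂ) ^ a * ((-t).sigmoid : ℂ) ^ b := by
  have hpos := t.sigmoid_pos
  have hneg := (-t).sigmoid_pos
  have hpos' := ofReal_ne_zero.2 hpos.ne'
  have hneg' := ofReal_ne_zero.2 hneg.ne'
  rw [← ofReal_one, ← ofReal_sub, ← Real.sigmoid_neg, abs_of_pos (mul_pos hpos hneg), real_smul,
    ofReal_one, cpow_sub _ _ hpos', cpow_sub _ _ hneg', cpow_one, cpow_one]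
  push_cast
  field

theorem integrable_sigmoid_cpow_mul_cpow {a b : ℂ} (ha : 0 < a.re) (hb : 0 < b.re) :
    Integrable fun t : ℝ ↦ (t.sigmoid : ℂ) ^ a * ((-t).sigmoid : ℂ) ^ b := by
  have hbeta := betaIntegral_convergent ha hb
  rw [intervalIntegrable_iff_integrableOn_Ioo_of_le zero_le_one, ← Real.range_sigmoid,
    ← image_univ, integrableOn_image_iff_integrableOn_abs_deriv_smul .univ
      (fun t _ ↦ (Real.hasDerivAt_sigmoid t).hasDerivWithinAt) Real.sigmoid_injective.injOn,
    integrableOn_univ] at hbeta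
  simpa only [abs_mul_sigmoid_smul_beta_integrand] using hbeta

theorem integral_sigmoid_cpow_mul_cpow (a b : ℂ) :
    ∫ t : ℝ, (t.sigmoid : ℂ) ^ a * ((-t).sigmoid : ℂ) ^ b = betaIntegral a b := by
  rw [betaIntegral, intervalIntegral.integral_of_le zero_le_one, integral_Ioc_eq_integral_Ioo,
    ← Real.range_sigmoid, ← image_univ, integral_image_eq_integral_abs_deriv_smul .univ
      (fun t _ ↦ (Real.hasDerivAt_sigmoid t).hasDerivWithinAt) Real.sigmoid_injective.injOn]
  simp only [abs_mul_sigmoid_smul_beta_integrand, setIntegral_univ]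

theorem sigmoid_two_mul (u : ℝ) : (2 * u).sigmoid = Real.exp u * (2 * Real.cosh u)⁻¹ := by
  rw [Real.sigmoid_def, Real.cosh_eq, show -(2 * u) = -u - u by ring, Real.exp_sub]
  field

theorem two_mul_sigmoid_cpow_mul_cpow (c : ℂ) (u : ℝ) :
    2 * (((2 * u).sigmoid : ℂ) ^ ((1 + c) / 2) * ((-(2 * u)).sigmoid : ℂ) ^ ((1 - c) / 2)) =
      exp (c * u) / Real.cosh u := by
  have hcosh : 0 < (2 * Real.cosh u)⁻¹ := by positivity
  have hexp (r : ℝ) (w : ℂ) : (Real.exp r : ℂ) ^ w = exp (r * w) := by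
    rw [cpow_def_of_ne_zero (by simp), ← ofReal_log (Real.exp_pos r).le, Real.log_exp]
  rw [← mul_neg, sigmoid_two_mul, sigmoid_two_mul, Real.cosh_neg, ofReal_mul, ofReal_mul,
    mul_cpow_ofReal_nonneg (Real.exp_pos _).le hcosh.le,
    mul_cpow_ofReal_nonneg (Real.exp_pos _).le hcosh.le, mul_mul_mul_comm,
    ← cpow_add _ _ (ofReal_ne_zero.2 hcosh.ne'), hexp, hexp, ← exp_add,
    show (1 + c) / 2 + (1 - c) / 2 = 1 by ring, cpow_one]
  push_cast
  rw [show u * ((1 + c) / 2) + -u * ((1 - c) / 2) = c * u by ring]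
  field

variable {c : ℂ}

theorem re_one_add_div_two_pos (hc : |c.re| < 1) : 0 < ((1 + c) / 2).re := by
  rw [div_ofNat_re, add_re, one_re]
  linarith [neg_lt_of_abs_lt hc]

theorem re_one_sub_div_two_pos (hc : |c.re| < 1) : 0 < ((1 - c) / 2).re := by
  rw [div_ofNat_re, sub_re, one_re]
  linarith [lt_of_abs_lt hc]

theorem integrable_exp_mul_div_cosh (hc : |c.re| < 1) :
    Integrable fun u : ℝ ↦ exp (c * u) / Real.cosh u := by
  have h := integrable_sigmoid_cpow_mul_cpow (a := (1 + c) / 2) (b := (1 - c) / 2)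
    (re_one_add_div_two_pos hc) (re_one_sub_div_two_pos hc)
  simpa only [two_mul_sigmoid_cpow_mul_cpow] using (h.comp_mul_left' two_ne_zero).const_mul 2

theorem integral_exp_mul_div_cosh (hc : |c.re| < 1) :
    ∫ u : ℝ, exp (c * u) / Real.cosh u = π / cos (π * c / 2) := by
  have hscale := Measure.integral_comp_mul_left (fun t : ℝ ↦
    (t.sigmoid : ℂ) ^ ((1 + c) / 2) * ((-t).sigmoid : ℂ) ^ ((1 - c) / 2)) 2
  have hbeta := Gamma_mul_Gamma_eq_betaIntegral (s := (1 + c) / 2) (t := (1 - c) / 2)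
    (re_one_add_div_two_pos hc) (re_one_sub_div_two_pos hc)
  rw [show (1 + c) / 2 + (1 - c) / 2 = 1 by ring, Gamma_one, one_mul,
    show (1 - c) / 2 = 1 - (1 + c) / 2 by ring, Gamma_mul_Gamma_one_sub,
    show (π : ℂ) * ((1 + c) / 2) = π * c / 2 + π / 2 by ring, sin_add_pi_div_two,
    show 1 - (1 + c) / 2 = (1 - c) / 2 by ring] at hbeta
  simp only [← two_mul_sigmoid_cpow_mul_cpow, integral_const_mul]
  rw [hscale, integral_sigmoid_cpow_mul_cpow, ← hbeta, real_smul, abs_of_pos (by positivity)]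
  push_cast
  ring

end Sech

section RiemannLebesgue

open Complex Set Bornology
open scoped Real

variable {E : Type*} [NormedAddCommGroup E] [NormedSpace ℂ E]

theorem tendsto_setIntegral_exp_mul_I_smul_cobounded {s : Set ℝ} {φ φ' : ℝ → ℝ}
    (hs : MeasurableSet s) (hφ : ∀ x ∈ s, HasDerivWithinAt φ (φ' x) s x)
    (hφ' : ∀ x ∈ s, φ' x ≠ 0) (hinj : InjOn φ s) (g : ℝ → E) :
    Tendsto (fun w : ℝ ↦ ∫ x in s, exp (w * φ x * I) • g x) (cobounded ℝ) (𝓝 0) := by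
  let ψ := Function.invFunOn φ s
  let G : ℝ → E := fun y ↦ |φ' (ψ y)|⁻¹ • g (ψ y)
  have himage : MeasurableSet (φ '' s) :=
    hs.image_of_continuousOn_injOn (fun x hx ↦ (hφ x hx).continuousWithinAt) hinj
  have hscale : -(2 * π)⁻¹ ≠ 0 := by simp
  have hRL := Real.tendsto_integral_exp_smul_cocompact ((φ '' s).indicator G)
  rw [← Metric.cobounded_eq_cocompact] at hRL
  refine (hRL.comp (tendsto_mul_left_cobounded hscale)).congr fun w ↦ ?_
  have hphase (y : ℝ) : Real.fourierChar (-(y * (-(2 * π)⁻¹ * w))) • (φ '' s).indicator G y =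
      (φ '' s).indicator (fun y ↦ exp (w * y * I) • G y) y := by
    rw [indicator_smul_apply _ _ G, Circle.smul_def, Real.fourierChar_apply]
    push_cast
    congr 2
    field
  simp only [Function.comp_def, hphase]
  rw [integral_indicator himage, integral_image_eq_integral_abs_deriv_smul hs hφ hinj]
  refine setIntegral_congr_fun hs fun x hx ↦ ?_
  simp only [G, ψ, hinj.leftInvOn_invFunOn hx]
  rw [smul_comm, smul_inv_smul₀ (abs_ne_zero.2 (hφ' x hx))]

theorem tendsto_integral_exp_mul_cosh_mul_I_smul_cobounded {g : ℝ → E} (hg : Integrable g) :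
    Tendsto (fun w : ℝ ↦ ∫ x, exp (w * Real.cosh x * I) • g x) (cobounded ℝ) (𝓝 0) := by
  have hright (g : ℝ → E) := tendsto_setIntegral_exp_mul_I_smul_cobounded measurableSet_Ioi
    (fun x _ ↦ (Real.hasDerivAt_cosh x).hasDerivWithinAt)
    (fun x hx ↦ (Real.sinh_pos_iff.2 hx).ne') (Real.cosh_injOn.mono Ioi_subset_Ici_self) g
  have hsum := (hright fun x ↦ g (-x)).add (hright g)
  rw [add_zero] at hsum
  refine hsum.congr fun w ↦ ?_
  have hint : Integrable fun x : ℝ ↦ exp (w * Real.cosh x * I) • g x :=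
    hg.bdd_smul 1 (by fun_prop) (ae_of_all _ fun x ↦ by
      rw [← ofReal_mul, norm_exp_ofReal_mul_I])
  have hreflect := integral_comp_neg_Ioi 0 fun x : ℝ ↦ exp (w * Real.cosh x * I) • g x
  simp only [Real.cosh_neg, neg_zero] at hreflect
  rw [hreflect, intervalIntegral.integral_Iic_add_Ioi hint.integrableOn hint.integrableOn]

end RiemannLebesgue

section Tail

open Complex Set Bornology
open scoped Real

variable {ν z : ℂ}

/-- A primitive of `z ↦ -2 * nicholsonKernel ν z p`, which unlike the Nicholson kernel remains
integrable in `p` on the imaginary axis. -/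
noncomputable def nicholsonTailKernel (ν z : ℂ) (p : ℝ × ℝ) : ℂ :=
  nicholsonKernel ν z p / (Real.cosh p.1 * Real.cosh p.2)

theorem cosh_mul_cosh_ne_zero (p : ℝ × ℝ) : (Real.cosh p.1 * Real.cosh p.2 : ℂ) ≠ 0 := by
  exact_mod_cast (mul_pos (Real.cosh_pos _) (Real.cosh_pos _)).ne'

theorem continuous_nicholsonKernel (ν z : ℂ) : Continuous (nicholsonKernel ν z) := by
  unfold nicholsonKernel
  fun_prop

theorem continuous_nicholsonTailKernel (ν z : ℂ) : Continuous (nicholsonTailKernel ν z) :=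
  (continuous_nicholsonKernel ν z).div (by fun_prop) cosh_mul_cosh_ne_zero

theorem nicholsonTailKernel_zero_right (ν : ℂ) (p : ℝ × ℝ) : nicholsonTailKernel ν 0 p =
    exp (2 * ν * p.1) / Real.cosh p.1 * (exp (0 * p.2) / Real.cosh p.2) := by
  rw [nicholsonTailKernel, nicholsonKernel, zero_mul, exp_zero, div_mul_div_comm]
  simp only [mul_zero, zero_mul, sub_zero, mul_one]

theorem norm_nicholsonKernel (ν z : ℂ) (p : ℝ × ℝ) : ‖nicholsonKernel ν z p‖ =
    Real.exp (2 * ν.re * p.1 - 2 * z.re * (Real.cosh p.1 * Real.cosh p.2)) := by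
  rw [nicholsonKernel, norm_exp, ← ofReal_mul]
  simp [-ofReal_mul]

theorem norm_nicholsonKernel_le_of_re_le {w : ℂ} (ν : ℂ) (h : w.re ≤ z.re) (p : ℝ × ℝ) :
    ‖nicholsonKernel ν z p‖ ≤ ‖nicholsonKernel ν w p‖ := by
  rw [norm_nicholsonKernel, norm_nicholsonKernel]
  have := Real.cosh_pos p.1
  have := Real.cosh_pos p.2
  gcongr

theorem norm_nicholsonTailKernel_le_of_re_nonneg (ν : ℂ) (hz : 0 ≤ z.re) (p : ℝ × ℝ) :
    ‖nicholsonTailKernel ν z p‖ ≤ ‖nicholsonTailKernel ν 0 p‖ := by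
  rw [nicholsonTailKernel, nicholsonTailKernel, norm_div, norm_div]
  gcongr
  exact norm_nicholsonKernel_le_of_re_le ν hz p

theorem abs_re_two_mul_lt_one (hν : |ν.re| < 1 / 2) : |(2 * ν).re| < 1 := by
  rw [← ofReal_ofNat, re_ofReal_mul, abs_mul, Nat.abs_ofNat]
  linarith

theorem integrable_nicholsonTailKernel (hν : |ν.re| < 1 / 2) (hz : 0 ≤ z.re) :
    Integrable (nicholsonTailKernel ν z) := by
  have hzero : Integrable (nicholsonTailKernel ν 0) := by
    have h := (integrable_exp_mul_div_cosh (c := 2 * ν) (abs_re_two_mul_lt_one hν)).mul_prod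
      (integrable_exp_mul_div_cosh (c := 0) (by simp))
    rwa [Measure.volume_eq_prod, funext (nicholsonTailKernel_zero_right ν)]
  exact hzero.mono (continuous_nicholsonTailKernel ν z).aestronglyMeasurable
    (ae_of_all _ (norm_nicholsonTailKernel_le_of_re_nonneg ν hz))

/-- The integral of `K_ν²` from `z` to `∞`, for `|re ν| < 1 / 2` and `0 ≤ re z`, in the form of a
double integral that also makes sense on the imaginary axis. -/
noncomputable def besselKSqTail (ν z : ℂ) : ℂ :=
  (∫ p, nicholsonTailKernel ν z p) / 4

theorem besselKSqTail_zero_right (hν : |ν.re| < 1 / 2) :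
    besselKSqTail ν 0 = π ^ 2 / (4 * cos (π * ν)) := by
  simp only [besselKSqTail, nicholsonTailKernel_zero_right, Measure.volume_eq_prod]
  rw [integral_prod_mul (fun u : ℝ ↦ exp (2 * ν * u) / Real.cosh u)
    (fun v : ℝ ↦ exp (0 * v) / Real.cosh v),
    integral_exp_mul_div_cosh (abs_re_two_mul_lt_one hν), integral_exp_mul_div_cosh (by simp)]
  simp only [mul_zero, zero_div, cos_zero, div_one]
  rw [show (π : ℂ) * (2 * ν) / 2 = π * ν by ring]
  field

theorem continuousOn_besselKSqTail (hν : |ν.re| < 1 / 2) :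
    ContinuousOn (besselKSqTail ν) {z | 0 ≤ z.re} := by
  refine (continuousOn_of_dominated
    (fun z _ ↦ (continuous_nicholsonTailKernel ν z).aestronglyMeasurable)
    (fun z hz ↦ ae_of_all _ (norm_nicholsonTailKernel_le_of_re_nonneg ν hz))
    (integrable_nicholsonTailKernel hν (by simp)).norm (ae_of_all _ fun p ↦ ?_)).div_const 4
  unfold nicholsonTailKernel nicholsonKernel
  fun_prop

theorem hasDerivAt_besselKSqTail (hν : |ν.re| < 1 / 2) (hz : 0 < z.re) :
    HasDerivAt (besselKSqTail ν) (-besselK ν z ^ 2) z := by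
  let x : ℂ := (z.re / 2 : ℝ)
  have hx : 0 < x.re := by simpa [x] using hz
  have hnear : {w : ℂ | x.re < w.re} ∈ 𝓝 z :=
    (isOpen_lt continuous_const continuous_re).mem_nhds (by simpa [x] using hz)
  have hbound (p : ℝ × ℝ) (w : ℂ) (hw : x.re < w.re) :
      ‖-2 * nicholsonKernel ν w p‖ ≤ ‖-2 * nicholsonKernel ν x p‖ := by
    rw [norm_mul, norm_mul]
    gcongr
    exact norm_nicholsonKernel_le_of_re_le ν hw.le p
  have hderiv (p : ℝ × ℝ) (w : ℂ) :
      HasDerivAt (fun w ↦ nicholsonTailKernel ν w p) (-2 * nicholsonKernel ν w p) w := by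
    refine (((((hasDerivAt_id w).const_mul 2).mul_const
      (Real.cosh p.1 * Real.cosh p.2 : ℂ)).const_sub (2 * ν * p.1)).cexp.div_const
      (Real.cosh p.1 * Real.cosh p.2 : ℂ)).congr_deriv ?_
    rw [div_eq_iff (cosh_mul_cosh_ne_zero p)]
    simp only [nicholsonKernel, id_eq]
    ring
  have hmain := (hasDerivAt_integral_of_dominated_loc_of_deriv_le (μ := volume) hnear
    (Eventually.of_forall fun w ↦ (continuous_nicholsonTailKernel ν w).aestronglyMeasurable)
    (integrable_nicholsonTailKernel hν hz.le)
    ((continuous_nicholsonKernel ν z).const_mul (-2)).aestronglyMeasurable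
    (ae_of_all _ hbound) ((integrable_nicholsonKernel ν hx).const_mul (-2)).norm
    (ae_of_all _ fun p w _ ↦ hderiv p w)).2.div_const 4
  refine hmain.congr_deriv ?_
  rw [besselK_sq, integral_const_mul]
  ring

theorem integral_nicholsonTailKernel_mul_I (ν : ℂ) (y u : ℝ) :
    ∫ v : ℝ, nicholsonTailKernel ν (y * I) (u, v) = exp (2 * ν * u) / Real.cosh u *
      ∫ v : ℝ, exp (↑(-2 * Real.cosh u * y) * Real.cosh v * I) • (exp (0 * v) / Real.cosh v) := by
  rw [← integral_const_mul]
  congr with v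
  rw [nicholsonTailKernel, nicholsonKernel, sub_eq_add_neg, exp_add, zero_mul, exp_zero,
    smul_eq_mul]
  push_cast
  ring_nf

theorem tendsto_besselKSqTail_mul_I_cobounded (hν : |ν.re| < 1 / 2) :
    Tendsto (fun y : ℝ ↦ besselKSqTail ν (y * I)) (cobounded ℝ) (𝓝 0) := by
  have hsech : Integrable fun v : ℝ ↦ exp (0 * v) / Real.cosh v :=
    integrable_exp_mul_div_cosh (by simp)
  have : (cobounded ℝ).IsCountablyGenerated := by
    rw [← comap_norm_atTop]
    infer_instance
  have hint (y : ℝ) : Integrable (nicholsonTailKernel ν (y * I)) (volume.prod volume) :=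
    integrable_nicholsonTailKernel hν (by simp)
  simp only [besselKSqTail, Measure.volume_eq_prod, integral_prod _ (hint _)]
  rw [show (0 : ℂ) = (∫ _ : ℝ, (0 : ℂ)) / 4 by simp]
  refine (tendsto_integral_filter_of_dominated_convergence
    (fun u : ℝ ↦ ‖exp (2 * ν * u) / Real.cosh u‖ * ∫ v : ℝ, ‖exp (0 * v) / Real.cosh v‖)
    (.of_forall fun y ↦ (hint y).integral_prod_left.aestronglyMeasurable)
    (.of_forall fun y ↦ ae_of_all _ fun u ↦ ?_)
    ((integrable_exp_mul_div_cosh (abs_re_two_mul_lt_one hν)).norm.mul_const _)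
    (ae_of_all _ fun u ↦ ?_)).div_const 4
  · rw [integral_nicholsonTailKernel_mul_I, norm_mul]
    gcongr
    refine (norm_integral_le_integral_norm _).trans_eq (integral_congr_ae (ae_of_all _ fun v ↦ ?_))
    simp only [norm_smul, ← ofReal_mul, norm_exp_ofReal_mul_I, one_mul]
  · have hphase : -2 * Real.cosh u ≠ 0 := by simp [(Real.cosh_pos u).ne']
    simpa only [integral_nicholsonTailKernel_mul_I, mul_zero, Function.comp_def] using
      ((tendsto_integral_exp_mul_cosh_mul_I_smul_cobounded hsech).comp
        (tendsto_mul_left_cobounded hphase)).const_mul (exp (2 * ν * u) / Real.cosh u)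

end Tail

section Boundary

open Complex Set
open scoped Real

variable {ν z : ℂ}

/- On the imaginary axis the derivative is the limit of the derivatives inside the half-plane. It is
taken over `ℝ` because `hasFDerivWithinAt_closure_of_tendsto_fderiv` requires a real derivative. -/
theorem hasFDerivWithinAt_besselKSqTail (hν : |ν.re| < 1 / 2) (hsin : sin (π * ν) ≠ 0)
    (hz : z ∈ slitPlane) :
    HasFDerivWithinAt (besselKSqTail ν) (ContinuousLinearMap.mul ℝ ℂ
      (-(π / (2 * sin (π * ν)) * (besselI (-ν) z - besselI ν z)) ^ 2)) {w | 0 ≤ w.re} z := by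
  have hQ (w : ℂ) (hw : 0 < w.re) : HasFDerivAt (besselKSqTail ν) (ContinuousLinearMap.mul ℝ ℂ
      (-(π / (2 * sin (π * ν)) * (besselI (-ν) w - besselI ν w)) ^ 2)) w := by
    have hK : besselK ν w = π / (2 * sin (π * ν)) * (besselI (-ν) w - besselI ν w) := by
      have := two_mul_sin_mul_besselK ν hw
      field_simp
      linear_combination this
    refine ((hasDerivAt_besselKSqTail hν hw).hasFDerivAt.restrictScalars ℝ).congr_fderiv ?_
    ext
    simp [hK, mul_comm]
  have hclosure : closure {w : ℂ | 0 < w.re} = {w | 0 ≤ w.re} := closure_setOfPred_lt_re 0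
  rw [← hclosure]
  refine hasFDerivWithinAt_closure_of_tendsto_fderiv
    (fun w hw ↦ (hQ w hw).differentiableAt.differentiableWithinAt) (convex_halfSpace_re_gt 0)
    (isOpen_lt continuous_const continuous_re) (fun w hw ↦ ?_) ?_
  · rw [hclosure] at hw
    exact (continuousOn_besselKSqTail hν w hw).mono fun _ ↦ le_of_lt (α := ℝ)
  · have hI (μ : ℂ) : Tendsto (besselI μ) (𝓝[{w | 0 < w.re}] z) (𝓝 (besselI μ z)) :=
      (hasDerivAt_besselI μ hz).continuousAt.continuousWithinAt
    refine (((ContinuousLinearMap.mul ℝ ℂ).continuous.tendsto _).comp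
      ((((hI (-ν)).sub (hI ν)).const_mul _).pow 2).neg).congr' ?_
    filter_upwards [self_mem_nhdsWithin] with w hw using (hQ w hw).fderiv.symm

end Boundary

section BesselJ

open Complex Set
open scoped Nat Real

variable {ν c : ℂ} {x : ℝ}

theorem besselJ_eq_cpow_mul_besselClifford (ν : ℂ) (hx : 0 < x) :
    besselJ ν x = (x / 2 : ℝ) ^ ν * besselClifford ν (-(x ^ 2 / 4)) := by
  have hx₂ : 0 < x / 2 := by positivity
  rw [besselJ, ← (hasSum_besselClifford ν _).tsum_eq, ← tsum_mul_left]
  refine tsum_congr fun k ↦ ?_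
  have hpow : exp ((2 * k : ℂ) * Real.log (x / 2)) = (x ^ 2 / 4 : ℂ) ^ k := by
    rw [mul_comm (2 : ℂ), mul_assoc, exp_nat_mul, two_mul, exp_add, ← ofReal_exp, Real.exp_log hx₂]
    push_cast
    ring
  rw [add_mul, exp_add, hpow, cpow_def_of_ne_zero (ofReal_ne_zero.2 hx₂.ne'), ofReal_log hx₂.le,
    neg_pow (x ^ 2 / 4 : ℂ), add_right_comm, mul_comm (log _)]
  field

theorem besselI_ofReal_mul_of_sq_eq_neg_one (ν : ℂ) (hx : 0 < x) (hc : c ^ 2 = -1) :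
    besselI ν (x * c) = c ^ ν * besselJ ν x := by
  have hx₂ : 0 < x / 2 := by positivity
  have hc₀ : c ≠ 0 := by
    rintro rfl
    norm_num at hc
  have hcpow : (x * c / 2) ^ ν = c ^ ν * (x / 2 : ℝ) ^ ν := by
    rw [show (x * c / 2) = (x / 2 : ℝ) * c by push_cast; ring,
      cpow_def_of_ne_zero (mul_ne_zero (ofReal_ne_zero.2 hx₂.ne') hc₀), log_ofReal_mul hx₂ hc₀,
      add_mul, exp_add, ofReal_log hx₂.le, ← cpow_def_of_ne_zero hc₀,
      ← cpow_def_of_ne_zero (ofReal_ne_zero.2 hx₂.ne'), mul_comm]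
  rw [besselI, besselJ_eq_cpow_mul_besselClifford ν hx, hcpow, mul_pow, hc, mul_neg_one, neg_div,
    mul_assoc]

theorem hasDerivAt_besselKSqTail_ofReal_mul (hν : |ν.re| < 1 / 2) (hsin : sin (π * ν) ≠ 0)
    (hx : 0 < x) (hc : c ^ 2 = -1) :
    HasDerivAt (fun x : ℝ ↦ besselKSqTail ν (x * c))
      (-(π / (2 * sin (π * ν)) * (c ^ (-ν) * besselJ (-ν) x - c ^ ν * besselJ ν x)) ^ 2 * c) x := by
  have hcI : c = I ∨ c = -I := sq_eq_sq_iff_eq_or_eq_neg.1 (hc.trans I_sq.symm)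
  have hre : c.re = 0 := by rcases hcI with rfl | rfl <;> simp
  have hmem : x * c ∈ slitPlane := by
    rcases hcI with rfl | rfl <;> simp [mem_slitPlane_iff, hx.ne']
  rw [← besselI_ofReal_mul_of_sq_eq_neg_one ν hx hc,
    ← besselI_ofReal_mul_of_sq_eq_neg_one (-ν) hx hc]
  refine ((hasFDerivWithinAt_besselKSqTail hν hsin hmem).comp_hasDerivAt x
    ((hasDerivAt_id x).ofReal_comp.mul_const c) (.of_forall fun y ↦ ?_)).congr_deriv ?_
  · simp [hre]
  · simp

theorem hasDerivAt_besselKSqTail_add (hν : |ν.re| < 1 / 2) (hsin : sin (π * ν) ≠ 0)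
    (hx : 0 < x) :
    HasDerivAt (fun x : ℝ ↦ besselKSqTail ν (x * I) + besselKSqTail ν (x * -I))
      (π ^ 2 / (2 * sin (π * ν)) * (besselJ ν x ^ 2 - besselJ (-ν) x ^ 2)) x := by
  have hI (μ : ℂ) : I ^ μ = exp (π * μ / 2 * I) := by
    rw [cpow_def_of_ne_zero I_ne_zero, log_I]
    ring_nf
  have hnegI (μ : ℂ) : (-I) ^ μ = exp (-(π * μ / 2) * I) := by
    rw [cpow_def_of_ne_zero (neg_ne_zero.2 I_ne_zero), log_neg_I]
    ring_nf
  have hsq : exp (π * ν / 2 * I) ^ 2 - exp (-(π * ν / 2) * I) ^ 2 = 2 * I * sin (π * ν) := by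
    rw [← exp_nat_mul, ← exp_nat_mul, Nat.cast_ofNat, ← mul_assoc, ← mul_assoc, mul_neg,
      mul_div_cancel₀ _ two_ne_zero]
    linear_combination -I * two_sin (π * ν) - (exp (-(π * ν) * I) - exp (π * ν * I)) * I_sq
  refine ((hasDerivAt_besselKSqTail_ofReal_mul hν hsin hx I_sq).add
    (hasDerivAt_besselKSqTail_ofReal_mul hν hsin hx ((neg_sq I).trans I_sq))).congr_deriv ?_
  rw [hI, hI, hnegI, hnegI, mul_neg, neg_div, neg_neg]
  generalize exp (π * ν / 2 * I) = e, exp (-(π * ν / 2) * I) = e' at hsq ⊢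
  field_simp
  linear_combination (besselJ ν x ^ 2 - besselJ (-ν) x ^ 2) * (-I * hsq - 2 * sin (π * ν) * I_sq)

theorem intervalIntegrable_besselJ_sq (hν : -(1 / 2) < ν.re) {T : ℝ} (hT : 0 ≤ T) :
    IntervalIntegrable (fun x ↦ besselJ ν x ^ 2) volume 0 T := by
  have hF := continuous_besselClifford ν
  have hcpow : IntervalIntegrable (fun x : ℝ ↦ (x : ℂ) ^ (2 * ν)) volume 0 T :=
    intervalIntegral.intervalIntegrable_cpow' (by
      rw [← ofReal_ofNat, re_ofReal_mul]
      linarith)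
  refine (hcpow.mul_continuousOn (g := fun x : ℝ ↦ ((2⁻¹ : ℝ) ^ ν *
    besselClifford ν (-(x ^ 2 / 4))) ^ 2) (by fun_prop)).congr_uIoo fun x hx ↦ ?_
  have hx : 0 < x := by
    rw [uIoo_of_le hT] at hx
    exact hx.1
  simp only [besselJ_eq_cpow_mul_besselClifford ν hx, div_eq_mul_inv, ofReal_mul,
    mul_cpow_ofReal_nonneg hx.le (inv_nonneg.2 zero_le_two), mul_pow, mul_comm 2 ν, cpow_mul_ofNat]
  ring

theorem integral_besselJ_sq_sub (hν : |ν.re| < 1 / 2) (hsin : sin (π * ν) ≠ 0) {T : ℝ}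
    (hT : 0 ≤ T) : ∫ x in (0 : ℝ)..T, (besselJ ν x ^ 2 - besselJ (-ν) x ^ 2) =
      2 * sin (π * ν) / π ^ 2 *
        (besselKSqTail ν (T * I) + besselKSqTail ν (T * -I) - 2 * besselKSqTail ν 0) := by
  obtain ⟨hlower, hupper⟩ := abs_lt.1 hν
  have hcont : Continuous fun x : ℝ ↦ besselKSqTail ν (x * I) + besselKSqTail ν (x * -I) :=
    ((continuousOn_besselKSqTail hν).comp_continuous (by fun_prop) (by simp)).add
      ((continuousOn_besselKSqTail hν).comp_continuous (by fun_prop) (by simp))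
  have hint : IntervalIntegrable (fun x ↦ besselJ ν x ^ 2 - besselJ (-ν) x ^ 2) volume 0 T :=
    (intervalIntegrable_besselJ_sq hlower hT).sub
      (intervalIntegrable_besselJ_sq (by rw [neg_re]; linarith) hT)
  have hFTC := intervalIntegral.integral_eq_sub_of_hasDerivAt_of_le hT hcont.continuousOn
    (fun x hx ↦ hasDerivAt_besselKSqTail_add hν hsin hx.1)
    (hint.const_mul (π ^ 2 / (2 * sin (π * ν))))
  rw [intervalIntegral.integral_const_mul, ofReal_zero, zero_mul, zero_mul] at hFTC
  field_simp at hFTC ⊢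
  linear_combination hFTC

theorem mem_integerComplement_of_abs_re_lt_one (hν : |ν.re| < 1) (hν₀ : ν ≠ 0) :
    ν ∈ integerComplement := by
  rintro ⟨k, rfl⟩
  rw [intCast_re, ← Int.cast_abs, ← Int.cast_one, Int.cast_lt, Int.abs_lt_one_iff] at hν
  exact hν₀ (by simp [hν])

theorem tendsto_integral_besselJ_sq_sub (hν : |ν.re| < 1 / 2) :
    Tendsto (fun T ↦ ∫ x in (0 : ℝ)..T, (besselJ ν x ^ 2 - besselJ (-ν) x ^ 2)) atTop
      (𝓝 (-tan (π * ν))) := by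
  obtain rfl | hν₀ := eq_or_ne ν 0
  · simp
  have hsin : sin (π * ν) ≠ 0 :=
    sin_pi_mul_ne_zero (mem_integerComplement_of_abs_re_lt_one (hν.trans (by norm_num)) hν₀)
  have hQ := tendsto_besselKSqTail_mul_I_cobounded hν
  rw [Metric.cobounded_eq_cocompact, cocompact_eq_atBot_atTop, tendsto_sup] at hQ
  have hneg := hQ.1.comp tendsto_neg_atTop_atBot
  simp only [Function.comp_def, ofReal_neg, neg_mul, ← mul_neg] at hneg
  have hlim := ((hQ.2.add hneg).sub_const (2 * besselKSqTail ν 0)).const_mul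
    (2 * sin (π * ν) / π ^ 2)
  have hvalue : 2 * sin (π * ν) / π ^ 2 * (0 + 0 - 2 * besselKSqTail ν 0) = -tan (π * ν) := by
    rw [besselKSqTail_zero_right hν, tan]
    field
  rw [hvalue] at hlim
  refine hlim.congr' ?_
  filter_upwards [eventually_ge_atTop 0] with T hT
    using (integral_besselJ_sq_sub hν hsin hT).symm

theorem besselJ_conj (ν : ℂ) (x : ℝ) :
    besselJ (starRingEnd ℂ ν) x = starRingEnd ℂ (besselJ ν x) := by
  rw [besselJ, besselJ, conj_tsum]
  refine tsum_congr fun k ↦ ?_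
  simp [← exp_conj, ← Gamma_conj, conj_ofNat]

theorem statement17_general (a : ℝ) :
    Tendsto (fun T : ℝ ↦ ∫ x in (0 : ℝ)..T, (besselJ (a * I) x ^ 2).im) atTop
      (𝓝 (-Real.tanh (π * a) / 2)) := by
  have hlim := tendsto_integral_besselJ_sq_sub (ν := a * I) (by simp)
  have hconj (x : ℝ) : besselJ (a * I) x ^ 2 - besselJ (-(a * I)) x ^ 2 =
      ((2 * (besselJ (a * I) x ^ 2).im : ℝ) : ℂ) * I := by
    rw [show -(a * I) = starRingEnd ℂ (a * I) by simp, besselJ_conj, ← map_pow, sub_conj]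
  have htan : -tan (π * (a * I)) = (-Real.tanh (π * a) : ℝ) * I := by
    rw [← mul_assoc, tan_mul_I]
    push_cast
    ring
  simp only [hconj, htan, intervalIntegral.integral_mul_const, intervalIntegral.integral_ofReal,
    intervalIntegral.integral_const_mul] at hlim
  simpa [Function.comp_def, -ofReal_tanh, -ofReal_neg] using
    ((continuous_im.tendsto _).comp hlim).div_const 2

end BesselJ

theorem statement17 (n : ℕ) (hn : 1 ≤ n) :
    ∃ L : ℝ, Filter.Tendsto (fun T : ℝ => ∫ x in (0 : ℝ)..T,
        ((besselJ (Complex.I * n / 2) x) ^ 2).im) Filter.atTop (𝓝 L) ∧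
      (1 / Real.sinh (Real.pi * n / 2)) * L = -(1 / (2 * Real.cosh (Real.pi * n / 2))) := by
  have hsinh : Real.sinh (Real.pi * n / 2) ≠ 0 := by
    rw [Real.sinh_ne_zero]
    positivity
  refine ⟨_, by simpa [mul_comm, mul_div_assoc] using statement17_general (n / 2), ?_⟩
  rw [← mul_div_assoc, Real.tanh_eq_sinh_div_cosh]
  field_simp
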